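/- Let n ∈ ℕ, p⃗, q⃗ ∈ [1,∞]^n and α⃗ ∈ ℝⁿ. Suppose f : ℝⁿ → ℂ is measurable and the quantity S(f) := sup{ |∫_{ℝⁿ} f(x) g(x) dx| : g ∈ U and ‖g‖_{Ė^{-α⃗,p⃗'}_{q⃗'}(ℝⁿ)} = 1 } is finite, where U denotes the set of all simple functions on ℝⁿ that vanish outside A_m for some m ∈ ℕ. Then f ∈ Ė^{α⃗,p⃗}_{q⃗}(ℝⁿ) and S(f) = ‖f‖_{Ė^{α⃗,p⃗}_{q⃗}(ℝⁿ)}. -/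

import Mathlib

open MeasureTheory ENNReal Filter

noncomputable section

/-- The dyadic annulus `R_k = (-2^k, 2^k) \ (-2^(k-1), 2^(k-1))` in `ℝ`. -/
def herzRing (k : ℤ) : Set ℝ :=
  Set.Ioo (-(2 : ℝ) ^ k) ((2 : ℝ) ^ k) \ Set.Ioo (-(2 : ℝ) ^ (k - 1)) ((2 : ℝ) ^ (k - 1))

/-- The `L^q` "norm" (valued in `ℝ≥0∞`) of an `ℝ≥0∞`-valued function on a set `s ⊆ ℝ`,
with the usual modification when `q = ∞`. -/
def lqNormOn (q : ℝ≥0∞) (s : Set ℝ) (g : ℝ → ℝ≥0∞) : ℝ≥0∞ :=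
  if q = ∞ then essSup (s.indicator g) volume
  else (∫⁻ x in s, g x ^ q.toReal) ^ (1 / q.toReal)

/-- The `l^p` norm over `ℤ` of an `ℝ≥0∞`-valued sequence, with the usual modification
when `p = ∞`. -/
def lpZNorm (p : ℝ≥0∞) (a : ℤ → ℝ≥0∞) : ℝ≥0∞ :=
  if p = ∞ then ⨆ k, a k
  else (∑' k : ℤ, a k ^ p.toReal) ^ (1 / p.toReal)

/-- The one-dimensional Herz norm `K^{α,p}_q` of an `ℝ≥0∞`-valued function on `ℝ`. -/
def herzNorm1 (α : ℝ) (p q : ℝ≥0∞) (g : ℝ → ℝ≥0∞) : ℝ≥0∞ :=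
  lpZNorm p fun k => ENNReal.ofReal ((2 : ℝ) ^ ((k : ℝ) * α)) * lqNormOn q (herzRing k) g

/-- The mixed-norm Herz norm on `ℝⁿ` of an `ℝ≥0∞`-valued function: the Herz norm
`K^{α_1,p_1}_{q_1}` is applied in the first variable, then `K^{α_2,p_2}_{q_2}` in the
second variable, …, and finally `K^{α_n,p_n}_{q_n}` in the last variable. -/
def mixedHerzNormE : (n : ℕ) → (Fin n → ℝ) → (Fin n → ℝ≥0∞) → (Fin n → ℝ≥0∞) →
    ((Fin n → ℝ) → ℝ≥0∞) → ℝ≥0∞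
  | 0, _, _, _, f => f fun i => i.elim0
  | n + 1, α, p, q, f =>
    herzNorm1 (α (Fin.last n)) (p (Fin.last n)) (q (Fin.last n)) fun xlast =>
      mixedHerzNormE n (Fin.init α) (Fin.init p) (Fin.init q) fun y => f (Fin.snoc y xlast)

/-- The mixed-norm Herz norm `‖f‖_{Ė^{α,p}_q(ℝⁿ)}` of a complex-valued function on `ℝⁿ`. -/
def herzNormC (n : ℕ) (α : Fin n → ℝ) (p q : Fin n → ℝ≥0∞) (f : (Fin n → ℝ) → ℂ) : ℝ≥0∞ :=
  mixedHerzNormE n α p q fun x => (‖f x‖₊ : ℝ≥0∞)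

/-- `I_m = (-2^m, -2^{-m}] ∪ [2^{-m}, 2^m)`. -/
def herzI (m : ℕ) : Set ℝ :=
  Set.Ioc (-(2 : ℝ) ^ (m : ℤ)) (-(2 : ℝ) ^ (-(m : ℤ))) ∪
    Set.Ico ((2 : ℝ) ^ (-(m : ℤ))) ((2 : ℝ) ^ (m : ℤ))

/-- `A_m = I_m^n ⊆ ℝⁿ`. -/
def herzA (n m : ℕ) : Set (Fin n → ℝ) := Set.univ.pi fun _ => herzI m

/-- The class `H(ℝⁿ)` of simple functions built from finitely many pairwise disjoint
parallelepipeds contained in some `A_m`. -/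
def IsHSimple (n : ℕ) (f : (Fin n → ℝ) → ℂ) : Prop :=
  ∃ (m N : ℕ) (a : Fin N → ℂ) (E : Fin N → Fin n → Set ℝ),
    (∀ k i, MeasurableSet (E k i)) ∧
    (∀ k, Set.univ.pi (E k) ⊆ herzA n m) ∧
    (Pairwise fun k l => Disjoint (Set.univ.pi (E k)) (Set.univ.pi (E l))) ∧
    f = fun x => ∑ k, (Set.univ.pi (E k)).indicator (fun _ => a k) x

/-- The Euclidean ball `B(x,r)` in `ℝⁿ`. -/
def eucBall (n : ℕ) (x : Fin n → ℝ) (r : ℝ) : Set (Fin n → ℝ) :=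
  {y | ∑ i, (y i - x i) ^ 2 < r ^ 2}

/-- The (uncentered) maximal operator in the `k`-th variable. -/
def maxVar (n : ℕ) (k : Fin n) (g : (Fin n → ℝ) → ℝ≥0∞) : (Fin n → ℝ) → ℝ≥0∞ :=
  fun x => ⨆ (a : ℝ) (b : ℝ) (_ : x k ∈ Set.Ioo a b),
    (volume (Set.Ioo a b))⁻¹ * ∫⁻ y in Set.Ioo a b, g (Function.update x k y)

/-- The centered Hardy–Littlewood maximal operator on `ℝⁿ`. -/
def centeredMax (n : ℕ) (g : (Fin n → ℝ) → ℝ≥0∞) : (Fin n → ℝ) → ℝ≥0∞ :=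
  fun x => ⨆ (r : ℝ) (_ : 0 < r),
    (volume (eucBall n x r))⁻¹ * ∫⁻ y in eucBall n x r, g y

/-- The composition `M_n ∘ ⋯ ∘ M_1` of the maximal operators in each variable. -/
def iteratedMax (n : ℕ) (g : (Fin n → ℝ) → ℝ≥0∞) : (Fin n → ℝ) → ℝ≥0∞ :=
  (List.ofFn fun k : Fin n => maxVar n k).foldl (fun h F => F h) g

/-- The iterated maximal operator `ℳ_t(f) = [M_n ⋯ M_1(|f|^t)]^{1/t}`. -/
def iterMaxPow (n : ℕ) (t : ℝ) (f : (Fin n → ℝ) → ℂ) : (Fin n → ℝ) → ℝ≥0∞ :=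
  fun x => iteratedMax n (fun y => (‖f y‖₊ : ℝ≥0∞) ^ t) x ^ (1 / t)

/-- The `l^r`-Herz type mixed norm of a sequence of functions on `ℝⁿ`. -/
def herzSeqNorm (n : ℕ) (r : ℝ≥0∞) (α : Fin n → ℝ) (p q : Fin n → ℝ≥0∞)
    (F : ℤ → (Fin n → ℝ) → ℂ) : ℝ≥0∞ :=
  mixedHerzNormE n α p q fun x => lpZNorm r fun j => (‖F j x‖₊ : ℝ≥0∞)

/-- `N` is a ball quasi-Banach function norm on (nonnegative extended-real-valued)
measurable functions on `ℝⁿ`. -/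
def IsBQBFNorm (n : ℕ) (N : ((Fin n → ℝ) → ℝ≥0∞) → ℝ≥0∞) : Prop :=
  (∀ f : (Fin n → ℝ) → ℝ≥0∞, Measurable f → N f = 0 → f =ᵐ[volume] 0) ∧
  (∀ f g : (Fin n → ℝ) → ℝ≥0∞, Measurable f → Measurable g →
    (∀ᵐ x ∂volume, g x ≤ f x) → N g ≤ N f) ∧
  (∀ (fm : ℕ → (Fin n → ℝ) → ℝ≥0∞) (f : (Fin n → ℝ) → ℝ≥0∞),
    (∀ m, Measurable (fm m)) → Measurable f →
    (∀ᵐ x ∂volume, Monotone (fun m => fm m x) ∧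
      Tendsto (fun m => fm m x) atTop (nhds (f x))) →
    Monotone (fun m => N (fm m)) ∧ Tendsto (fun m => N (fm m)) atTop (nhds (N f))) ∧
  (∀ (x : Fin n → ℝ) (r : ℝ), 0 < r →
    N ((eucBall n x r).indicator fun _ => (1 : ℝ≥0∞)) ≠ ∞)

/-- `N` is a ball Banach function norm: a ball quasi-Banach function norm that moreover
satisfies the triangle inequality and locally dominates the `L¹` norm. -/
def IsBallBanachNorm (n : ℕ) (N : ((Fin n → ℝ) → ℝ≥0∞) → ℝ≥0∞) : Prop :=
  IsBQBFNorm n N ∧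
  (∀ f g : (Fin n → ℝ) → ℝ≥0∞, Measurable f → Measurable g → N (f + g) ≤ N f + N g) ∧
  (∀ (x : Fin n → ℝ) (r : ℝ), 0 < r → ∃ C : ℝ≥0∞, 0 < C ∧ C ≠ ∞ ∧
    ∀ f : (Fin n → ℝ) → ℝ≥0∞, Measurable f → (∫⁻ y in eucBall n x r, f y) ≤ C * N f)

/-- The associate (Köthe dual) norm of a function norm `N`. -/
def assocNormOf (n : ℕ) (N : ((Fin n → ℝ) → ℝ≥0∞) → ℝ≥0∞)
    (f : (Fin n → ℝ) → ℝ≥0∞) : ℝ≥0∞ :=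
  ⨆ (g : (Fin n → ℝ) → ℝ≥0∞) (_ : Measurable g) (_ : N g = 1), ∫⁻ x, f x * g x

/-- The `θ`-convexification of a function norm: `‖f‖_{X^θ} = ‖|f|^θ‖_X^{1/θ}`
(here stated with `θ` in place of `1/p`, so `X^{1/p}` is `convexPow n (1/p) N`). -/
def convexPow (n : ℕ) (θ : ℝ) (N : ((Fin n → ℝ) → ℝ≥0∞) → ℝ≥0∞)
    (f : (Fin n → ℝ) → ℝ≥0∞) : ℝ≥0∞ :=
  N (fun x => f x ^ θ) ^ (1 / θ)

/-- The associate space norm of the mixed-norm Herz space, for complex-valued functions. -/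
def herzAssocNormC (n : ℕ) (α : Fin n → ℝ) (p q : Fin n → ℝ≥0∞)
    (f : (Fin n → ℝ) → ℂ) : ℝ≥0∞ :=
  ⨆ (g : (Fin n → ℝ) → ℂ) (_ : Measurable g) (_ : herzNormC n α p q g = 1),
    ∫⁻ x, (‖f x * g x‖₊ : ℝ≥0∞)

structure Nice {X : Type} [MeasurableSpace X] (μ : Measure X)
    (N N' : (X → ℝ≥0∞) → ℝ≥0∞) : Prop where
  meas : ∀ (Y : Type) [MeasurableSpace Y] (F : X → Y → ℝ≥0∞),
    Measurable (Function.uncurry F) → Measurable fun y => N fun x => F x y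
  meas' : ∀ (Y : Type) [MeasurableSpace Y] (F : X → Y → ℝ≥0∞),
    Measurable (Function.uncurry F) → Measurable fun y => N' fun x => F x y
  mono' : ∀ g h : X → ℝ≥0∞, (∀ x, g x ≤ h x) → N' g ≤ N' h
  smul' : ∀ (c : ℝ≥0∞) (g : X → ℝ≥0∞), Measurable g → N' (fun x => c * g x) = c * N' g
  holder : ∀ f g : X → ℝ≥0∞, Measurable f → Measurable g →
    ∫⁻ x, f x * g x ∂μ ≤ N f * N' g
  dual : ∀ (Y : Type) [MeasurableSpace Y] (F : X → Y → ℝ≥0∞), Measurable (Function.uncurry F) →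
    ∃ G : ℕ → X → Y → ℝ≥0∞, (∀ j, Measurable (Function.uncurry (G j))) ∧
      (∀ j y, N' (fun x => G j x y) ≤ 1) ∧
      ∀ y, N (fun x => F x y) ≤ ⨆ j, ∫⁻ x, F x y * G j x y ∂μ

lemma meas_lint {X Y : Type} [MeasurableSpace X] [MeasurableSpace Y] (μ : Measure X) [SFinite μ]
    (F : X → Y → ℝ≥0∞) (hF : Measurable (Function.uncurry F)) :
    Measurable fun y => ∫⁻ x, F x y ∂μ := hF.lintegral_prod_left'

open Classical in
lemma Nice.dual_mono {X : Type} [MeasurableSpace X] {μ : Measure X} [SFinite μ]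
    {N N' : (X → ℝ≥0∞) → ℝ≥0∞} (H : Nice μ N N')
    (Y : Type) [MeasurableSpace Y] (F : X → Y → ℝ≥0∞) (hF : Measurable (Function.uncurry F)) :
    ∃ G : ℕ → X → Y → ℝ≥0∞, (∀ j, Measurable (Function.uncurry (G j))) ∧
      (∀ j y, N' (fun x => G j x y) ≤ 1) ∧
      (∀ y, Monotone fun j => ∫⁻ x, F x y * G j x y ∂μ) ∧
      ∀ y, N (fun x => F x y) ≤ ⨆ j, ∫⁻ x, F x y * G j x y ∂μ := by
  obtain ⟨G, hGm, hG1, hG2⟩ := H.dual Y F hF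
  let K : ℕ → X → Y → ℝ≥0∞ := fun j => Nat.rec (G 0)
    (fun j Kj => fun x y => if ∫⁻ x, F x y * Kj x y ∂μ < ∫⁻ x, F x y * G (j+1) x y ∂μ
      then G (j+1) x y else Kj x y) j
  have K0 : K 0 = G 0 := rfl
  have K1 : ∀ j, K (j+1) = fun x y => if ∫⁻ x, F x y * K j x y ∂μ < ∫⁻ x, F x y * G (j+1) x y ∂μ
      then G (j+1) x y else K j x y := fun j => rfl
  have hint : ∀ (A : X → Y → ℝ≥0∞), Measurable (Function.uncurry A) →
      Measurable fun y => ∫⁻ x, F x y * A x y ∂μ := fun A hA =>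
    meas_lint μ (fun x y => F x y * A x y) (hF.mul hA)
  have hKm : ∀ j, Measurable (Function.uncurry (K j)) := by
    intro j
    induction j with
    | zero => exact hGm 0
    | succ j ih =>
      rw [K1]
      have : MeasurableSet {y | ∫⁻ x, F x y * K j x y ∂μ < ∫⁻ x, F x y * G (j+1) x y ∂μ} :=
        measurableSet_lt (hint _ ih) (hint _ (hGm _))
      exact Measurable.ite (measurable_snd this) (hGm (j+1)) ih
  have hstep : ∀ j y, ∫⁻ x, F x y * K (j+1) x y ∂μ =
      max (∫⁻ x, F x y * K j x y ∂μ) (∫⁻ x, F x y * G (j+1) x y ∂μ) := by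
    intro j y
    rw [K1]
    by_cases h : ∫⁻ x, F x y * K j x y ∂μ < ∫⁻ x, F x y * G (j+1) x y ∂μ
    · simp only [h, if_true]; rw [max_eq_right h.le]
    · simp only [h, if_false]; rw [max_eq_left (not_lt.1 h)]
  refine ⟨K, hKm, ?_, ?_, ?_⟩
  · intro j y
    induction j with
    | zero => exact hG1 0 y
    | succ j ih =>
      rw [K1]
      by_cases h : ∫⁻ x, F x y * K j x y ∂μ < ∫⁻ x, F x y * G (j+1) x y ∂μ
      · simp only [h, if_true]; exact hG1 _ _
      · simp only [h, if_false]; exact ih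
  · intro y
    refine monotone_nat_of_le_succ fun j => ?_
    rw [hstep]; exact le_max_left _ _
  · intro y
    refine (hG2 y).trans (iSup_mono fun j => ?_)
    cases j with
    | zero => exact le_of_eq rfl
    | succ j => rw [hstep]; exact le_max_right _ _

/-- general `L^q` norm -/
def Lq {X : Type} [MeasurableSpace X] (μ : Measure X) (q : ℝ≥0∞) (g : X → ℝ≥0∞) : ℝ≥0∞ :=
  if q = ∞ then essSup g μ else (∫⁻ x, g x ^ q.toReal ∂μ) ^ (1 / q.toReal)

lemma Lq_top {X : Type} [MeasurableSpace X] (μ : Measure X) (g : X → ℝ≥0∞) :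
    Lq μ ∞ g = essSup g μ := if_pos rfl

lemma Lq_fin {X : Type} [MeasurableSpace X] (μ : Measure X) {q : ℝ≥0∞} (hq : q ≠ ∞)
    (g : X → ℝ≥0∞) :
    Lq μ q g = (∫⁻ x, g x ^ q.toReal ∂μ) ^ (1 / q.toReal) := if_neg hq

lemma Lq_one {X : Type} [MeasurableSpace X] (μ : Measure X) (g : X → ℝ≥0∞) :
    Lq μ 1 g = ∫⁻ x, g x ∂μ := by
  rw [Lq_fin _ (by simp)]; simp

lemma Lq_mono {X : Type} [MeasurableSpace X] (μ : Measure X) (q : ℝ≥0∞) {g h : X → ℝ≥0∞}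
    (H : g ≤ᵐ[μ] h) : Lq μ q g ≤ Lq μ q h := by
  unfold Lq
  split_ifs with hq
  · exact essSup_mono_ae H
  · refine ENNReal.rpow_le_rpow (lintegral_mono_ae ?_) (by positivity)
    filter_upwards [H] with x hx
    exact ENNReal.rpow_le_rpow hx (by positivity)

lemma Lq_smul {X : Type} [MeasurableSpace X] (μ : Measure X) (q : ℝ≥0∞) (h0 : q ≠ 0)
    (c : ℝ≥0∞) {g : X → ℝ≥0∞}
    (hg : Measurable g) : Lq μ q (fun x => c * g x) = c * Lq μ q g := by
  unfold Lq
  split_ifs with hq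
  · exact ENNReal.essSup_const_mul
  · have hpos : 0 < q.toReal := ENNReal.toReal_pos h0 hq
    simp_rw [ENNReal.mul_rpow_of_nonneg _ _ hpos.le]
    rw [lintegral_const_mul _ (hg.pow_const _), ENNReal.mul_rpow_of_nonneg _ _ (by positivity),
      ← ENNReal.rpow_mul, mul_one_div_cancel hpos.ne', ENNReal.rpow_one]

lemma lt_essSup_iff' {X : Type} [MeasurableSpace X] (μ : Measure X) (g : X → ℝ≥0∞) (c : ℝ≥0∞) :
    c < essSup g μ ↔ μ {x | c < g x} ≠ 0 := by
  rw [← not_le, not_iff_not]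
  constructor
  · intro h
    have : ∀ᵐ x ∂μ, g x ≤ c := (ENNReal.ae_le_essSup g).mono fun x hx => hx.trans h
    simpa [ae_iff] using this
  · intro h
    refine essSup_le_of_ae_le _ ?_
    simpa [ae_iff, Filter.EventuallyLE] using h

lemma Lq_meas {X : Type} [MeasurableSpace X] (μ : Measure X) [SFinite μ] (q : ℝ≥0∞)
    (Y : Type) [MeasurableSpace Y] (F : X → Y → ℝ≥0∞)
    (hF : Measurable (Function.uncurry F)) : Measurable fun y => Lq μ q fun x => F x y := by
  unfold Lq
  split_ifs with hq
  · refine measurable_of_Ioi fun c => ?_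
    have : ((fun y => essSup (fun x => F x y) μ) ⁻¹' Set.Ioi c) =
        {y | μ ((fun x => (x, y)) ⁻¹' {z : X × Y | c < Function.uncurry F z}) ≠ 0} := by
      ext y
      simp only [Set.mem_preimage, Set.mem_Ioi, lt_essSup_iff']
      rfl
    rw [this]
    have h1 : MeasurableSet {z : X × Y | c < Function.uncurry F z} :=
      measurableSet_lt measurable_const hF
    have h2 := measurable_measure_prodMk_right (μ := μ) h1
    exact (h2 (measurableSet_singleton 0)).compl
  · exact (meas_lint μ (fun x y => F x y ^ q.toReal) (hF.pow_const _)).pow_const _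

lemma conj_cases {q q' : ℝ≥0∞} (h1 : 1 ≤ q) (h : 1 / q + 1 / q' = 1) :
    (q = 1 ∧ q' = ∞) ∨ (q = ∞ ∧ q' = 1) ∨
      (q ≠ ∞ ∧ q' ≠ ∞ ∧ q.toReal.HolderConjugate q'.toReal) := by
  simp only [one_div] at h
  by_cases hq : q = ∞
  · subst hq; right; left
    simpa using h
  by_cases hq' : q' = ∞
  · subst hq'; left
    simpa using h
  right; right
  refine ⟨hq, hq', ?_⟩
  have hq0 : q ≠ 0 := (zero_lt_one.trans_le h1).ne'
  have hq0' : q' ≠ 0 := by rintro rfl; simp at h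
  have e : q.toReal⁻¹ + q'.toReal⁻¹ = 1 := by
    rw [← ENNReal.toReal_inv, ← ENNReal.toReal_inv, ← ENNReal.toReal_add (by simpa) (by simpa), h]
    simp
  rw [Real.holderConjugate_iff]
  refine ⟨?_, e⟩
  have hp' : 0 < q'.toReal⁻¹ := inv_pos.2 (ENNReal.toReal_pos hq0' hq')
  have : q.toReal⁻¹ < 1 := by linarith
  exact (inv_lt_one₀ (ENNReal.toReal_pos hq0 hq)).1 this

lemma conj_pos' {q q' : ℝ≥0∞} (h : 1 / q + 1 / q' = 1) : q' ≠ 0 := by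
  rintro rfl; simp at h

lemma Lq_holder {X : Type} [MeasurableSpace X] (μ : Measure X) {q q' : ℝ≥0∞}
    (h1 : 1 ≤ q) (h : 1 / q + 1 / q' = 1) (f g : X → ℝ≥0∞) (hf : Measurable f)
    (hg : Measurable g) : ∫⁻ x, f x * g x ∂μ ≤ Lq μ q f * Lq μ q' g := by
  rcases conj_cases h1 h with ⟨rfl, rfl⟩ | ⟨rfl, rfl⟩ | ⟨a, b, c⟩
  · rw [Lq_one, Lq_top, ← lintegral_mul_const _ hf]
    refine lintegral_mono_ae ?_
    filter_upwards [ENNReal.ae_le_essSup g (μ := μ)] with x hx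
    gcongr
  · rw [Lq_one, Lq_top, ← lintegral_const_mul _ hg]
    refine lintegral_mono_ae ?_
    filter_upwards [ENNReal.ae_le_essSup f (μ := μ)] with x hx
    gcongr
  · rw [Lq_fin _ a, Lq_fin _ b]
    exact ENNReal.lintegral_mul_le_Lp_mul_Lq μ c hf.aemeasurable hg.aemeasurable

lemma rpow_helper (a : ℝ≥0∞) (q : ℝ) (ha : a ≠ ∞) :
    a ≤ a ^ q * (a ^ (q - 1))⁻¹ := by
  by_cases h : a = 0
  · simp [h]
  · rw [← ENNReal.rpow_neg, ← ENNReal.rpow_add _ _ h ha]; simp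

open Classical in
lemma Lq_dual {X : Type} [MeasurableSpace X] (μ : Measure X) [SigmaFinite μ] {q q' : ℝ≥0∞}
    (h1 : 1 ≤ q) (h : 1 / q + 1 / q' = 1)
    (Y : Type) [MeasurableSpace Y] (F : X → Y → ℝ≥0∞) (hF : Measurable (Function.uncurry F)) :
    ∃ G : ℕ → X → Y → ℝ≥0∞, (∀ j, Measurable (Function.uncurry (G j))) ∧
      (∀ j y, Lq μ q' (fun x => G j x y) ≤ 1) ∧
      ∀ y, Lq μ q (fun x => F x y) ≤ ⨆ j, ∫⁻ x, F x y * G j x y ∂μ := by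
  have hFy : ∀ y, Measurable fun x => F x y := fun y => hF.comp measurable_prodMk_right
  rcases conj_cases h1 h with ⟨rfl, rfl⟩ | ⟨rfl, rfl⟩ | ⟨a, b, c⟩
  · refine ⟨fun _ _ _ => 1, fun _ => measurable_const, fun j y => ?_, fun y => ?_⟩
    · rw [Lq_top]
      exact essSup_le_of_ae_le _ (Eventually.of_forall fun _ => le_rfl)
    · simp [Lq_one]
  · obtain ⟨e, he⟩ := exists_surjective_nat (ℕ × ℚ)
    let B := spanningSets μ
    let E : ℕ × ℚ → Set (X × Y) := fun z =>
      {w | w.1 ∈ B z.1 ∧ (((z.2 : ℝ).toNNReal : ℝ≥0∞)) < F w.1 w.2}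
    have hE : ∀ z, MeasurableSet (E z) := fun z =>
      (measurable_fst (measurableSet_spanningSets μ z.1)).inter
        (measurableSet_lt measurable_const hF)
    let m : ℕ × ℚ → Y → ℝ≥0∞ := fun z y => μ ((fun x => (x, y)) ⁻¹' (E z))
    have hm : ∀ z, Measurable (m z) := fun z => measurable_measure_prodMk_right (hE z)
    have hEy : ∀ z y, MeasurableSet ((fun x => (x, y)) ⁻¹' (E z)) := fun z y =>
      measurable_prodMk_right (hE z)
    refine ⟨fun j x y => (m (e j) y)⁻¹ * ((fun x => (x, y)) ⁻¹' (E (e j))).indicator 1 x,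
      fun j => ?_, fun j y => ?_, fun y => ?_⟩
    · refine ((hm (e j)).inv.comp measurable_snd).mul ?_
      exact (measurable_one (α := ℝ≥0∞)).indicator (hE (e j))
    · rw [Lq_one, lintegral_const_mul _ (measurable_one.indicator (hEy _ _)),
        lintegral_indicator_one (hEy _ _)]
      exact ENNReal.inv_mul_le_one _
    · rw [Lq_top]
      refine le_of_forall_lt fun d hd => ?_
      obtain ⟨r, -, hr1, hr2⟩ := ENNReal.lt_iff_exists_rat_btwn.1 hd
      refine hr1.trans_le ?_
      rw [lt_essSup_iff'] at hr2
      have hU : {x | ((((r : ℝ).toNNReal : ℝ≥0∞))) < F x y} = ⋃ n, (fun x => (x, y)) ⁻¹' (E (n, r)) := by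
        ext x
        simp only [E, Set.mem_ofPred_eq, Set.mem_iUnion, Set.mem_preimage, exists_and_right]
        have : x ∈ ⋃ i, B i := by rw [iUnion_spanningSets]; trivial
        rw [Set.mem_iUnion] at this
        tauto
      rw [hU, Ne, measure_iUnion_null_iff] at hr2
      push Not at hr2
      obtain ⟨n, hn⟩ := hr2
      obtain ⟨j, hj⟩ := he (n, r)
      refine le_trans ?_ (le_iSup _ j)
      dsimp only
      rw [hj]
      have hmtop : m (n, r) y ≠ ∞ := by
        refine ((measure_mono ?_).trans_lt (measure_spanningSets_lt_top μ n)).ne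
        intro x hx
        exact hx.1
      calc (((r : ℝ).toNNReal : ℝ≥0∞)) = (((r : ℝ).toNNReal : ℝ≥0∞)) * ((m (n, r) y)⁻¹ * m (n, r) y) := by
            rw [ENNReal.inv_mul_cancel hn hmtop, mul_one]
        _ = ∫⁻ x, (((r : ℝ).toNNReal : ℝ≥0∞)) * ((m (n, r) y)⁻¹ *
              ((fun x => (x, y)) ⁻¹' (E (n, r))).indicator 1 x) ∂μ := by
            rw [lintegral_const_mul _ ((measurable_one.indicator (hEy _ _)).const_mul _),
              lintegral_const_mul _ (measurable_one.indicator (hEy _ _)),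
              lintegral_indicator_one (hEy _ _)]
        _ ≤ _ := by
            refine lintegral_mono fun x => ?_
            by_cases hx : x ∈ ((fun x => (x, y)) ⁻¹' (E (n, r)))
            · have : (((r : ℝ).toNNReal : ℝ≥0∞)) < F x y := hx.2
              dsimp only
              gcongr
            · simp [Set.indicator_of_notMem hx]
  · set s := q.toReal with hs
    set s' := q'.toReal with hs'
    have s1 : 1 < s := c.lt
    have s0 : 0 < s := c.pos
    have s0' : 0 < s' := c.symm.pos
    have hss : (s - 1) * s' = s := c.sub_one_mul_conj
    let B := spanningSets μ
    let T : ℕ → X → Y → ℝ≥0∞ := fun j x y => (B j).indicator (fun x => min (F x y) j) x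
    have hT : ∀ j, Measurable (Function.uncurry (T j)) := by
      intro j
      exact (hF.min measurable_const).indicator
        (measurable_fst (measurableSet_spanningSets μ j))
    have hTy : ∀ j y, Measurable fun x => T j x y := fun j y => (hT j).comp measurable_prodMk_right
    have hTF : ∀ j x y, T j x y ≤ F x y := by
      intro j x y
      refine Set.indicator_le' (fun _ _ => min_le_left _ _) (fun _ _ => zero_le) x
    have hTmono : ∀ y, Monotone fun j => fun x => T j x y ^ s := by
      intro y i j hij x
      refine ENNReal.rpow_le_rpow ?_ s0.le
      refine (Set.indicator_le_indicator_of_subset (monotone_spanningSets μ hij) (fun _ => zero_le) x).trans ?_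
      refine Set.indicator_le_indicator ?_
      gcongr
    have hTsup : ∀ x y, ⨆ j, T j x y ^ s = F x y ^ s := by
      intro x y
      refine le_antisymm (iSup_le fun j => ENNReal.rpow_le_rpow (hTF j x y) s0.le) ?_
      have : F x y ≤ ⨆ j, T j x y := by
        refine le_of_forall_lt fun d hd => ?_
        obtain ⟨r, hr1, hr2⟩ := ENNReal.lt_iff_exists_nnreal_btwn.1 hd
        obtain ⟨k, hk⟩ := exists_nat_ge r
        have : x ∈ ⋃ i, B i := by rw [iUnion_spanningSets]; trivial
        obtain ⟨i, hi⟩ := Set.mem_iUnion.1 this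
        refine hr1.trans_le (le_trans ?_ (le_iSup _ (max i k)))
        have hi' : x ∈ B (max i k) := monotone_spanningSets μ (le_max_left _ _) hi
        simp only [T, Set.indicator_of_mem hi']
        refine le_min hr2.le ?_
        have h3 : (r : ℝ≥0∞) ≤ ((k : NNReal) : ℝ≥0∞) := ENNReal.coe_le_coe.2 hk
        refine h3.trans ?_
        rw [ENNReal.coe_natCast]
        exact_mod_cast le_max_right i k
      have h2 := (ENNReal.orderIsoRpow s s0).map_iSup fun j => T j x y
      simp only [ENNReal.orderIsoRpow_apply] at h2
      rw [← h2]
      exact ENNReal.rpow_le_rpow this s0.le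
    let I : ℕ → Y → ℝ≥0∞ := fun j y => ∫⁻ x, T j x y ^ s ∂μ
    have hI : ∀ j, Measurable (I j) := fun j =>
      meas_lint μ (fun x y => T j x y ^ s) ((hT j).pow_const _)
    have hItop : ∀ j y, I j y ≠ ∞ := by
      intro j y
      have : I j y ≤ ∫⁻ x, (B j).indicator (fun _ => (j : ℝ≥0∞) ^ s) x ∂μ := by
        refine lintegral_mono fun x => ?_
        by_cases hx : x ∈ B j
        · simp only [T, Set.indicator_of_mem hx]
          exact ENNReal.rpow_le_rpow (min_le_right _ _) s0.le
        · simp [T, Set.indicator_of_notMem hx, s0]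
      refine ne_top_of_le_ne_top ?_ this
      rw [lintegral_indicator_const (measurableSet_spanningSets μ j)]
      exact ENNReal.mul_ne_top (by simp [s0.le]) (measure_spanningSets_lt_top μ j).ne
    let A : ℕ → Y → ℝ≥0∞ := fun j y => I j y ^ (1 / s)
    have hAs : ∀ j y, A j y ^ s = I j y := fun j y => by
      simp only [A]
      rw [← ENNReal.rpow_mul, one_div_mul_cancel s0.ne', ENNReal.rpow_one]
    have hAtop : ∀ j y, A j y ≠ ∞ := fun j y =>
      ENNReal.rpow_ne_top_of_nonneg (by positivity) (hItop j y)
    refine ⟨fun j x y => (A j y ^ (s - 1))⁻¹ * T j x y ^ (s - 1), fun j => ?_, fun j y => ?_,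
      fun y => ?_⟩
    · exact ((((hI j).pow_const _).pow_const _).inv.comp measurable_snd).mul ((hT j).pow_const _)
    · rw [Lq_fin _ b, ← hs']
      have : ∀ x, ((A j y ^ (s - 1))⁻¹ * T j x y ^ (s - 1)) ^ s' = (I j y)⁻¹ * T j x y ^ s := by
        intro x
        rw [ENNReal.mul_rpow_of_nonneg _ _ s0'.le, ENNReal.inv_rpow, ← ENNReal.rpow_mul (A j y),
          ← ENNReal.rpow_mul (T j x y), hss, hAs]
      simp_rw [this]
      rw [lintegral_const_mul _ ((hTy j y).pow_const _)]
      calc _ ≤ (1 : ℝ≥0∞) ^ (1 / s') :=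
            ENNReal.rpow_le_rpow (ENNReal.inv_mul_le_one _) (by positivity)
        _ = 1 := ENNReal.one_rpow _
    · rw [Lq_fin _ a, ← hs]
      simp_rw [← hTsup]
      rw [lintegral_iSup (fun j => (hTy j y).pow_const _) (hTmono y)]
      have h2 := (ENNReal.orderIsoRpow (1 / s) (by positivity)).map_iSup fun j => I j y
      simp only [ENNReal.orderIsoRpow_apply] at h2
      refine le_trans (le_of_eq h2) (iSup_mono fun j => ?_)
      refine (rpow_helper (A j y) s (hAtop j y)).trans ?_
      rw [hAs, mul_comm]
      simp only [I]
      rw [← lintegral_const_mul _ ((hTy j y).pow_const _)]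
      refine lintegral_mono fun x => ?_
      have : T j x y ^ s = T j x y * T j x y ^ (s - 1) := by
        nth_rewrite 2 [← ENNReal.rpow_one (T j x y)]
        rw [← ENNReal.rpow_add_of_nonneg _ _ zero_le_one (by linarith)]
        congr 1; ring
      rw [this]
      calc (A j y ^ (s - 1))⁻¹ * (T j x y * T j x y ^ (s - 1))
          = T j x y * ((A j y ^ (s - 1))⁻¹ * T j x y ^ (s - 1)) := by ring
        _ ≤ _ := by gcongr; exact hTF j x y

lemma Lq_nice {X : Type} [MeasurableSpace X] (μ : Measure X) [SigmaFinite μ] {q q' : ℝ≥0∞}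
    (h1 : 1 ≤ q) (h : 1 / q + 1 / q' = 1) : Nice μ (Lq μ q) (Lq μ q') where
  meas := Lq_meas μ q
  meas' := Lq_meas μ q'
  mono' := fun _ _ H => Lq_mono μ q' (Eventually.of_forall H)
  smul' := fun c _ hg => Lq_smul μ q' (conj_pos' h) c hg
  holder := Lq_holder μ h1 h
  dual := Lq_dual μ h1 h

lemma mem_herzRing (k : ℤ) (x : ℝ) :
    x ∈ herzRing k ↔ (2 : ℝ) ^ (k - 1) ≤ |x| ∧ |x| < (2 : ℝ) ^ k := by
  unfold herzRing
  rw [Set.mem_sdiff, Set.mem_Ioo, Set.mem_Ioo, ← abs_lt, ← abs_lt, not_lt, and_comm]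

lemma herzRing_meas (k : ℤ) : MeasurableSet (herzRing k) :=
  measurableSet_Ioo.diff measurableSet_Ioo

lemma herzRing_disj : Pairwise (Function.onFun Disjoint herzRing) := by
  have key : ∀ k l : ℤ, k < l → Disjoint (herzRing k) (herzRing l) := by
    intro k l hkl
    rw [Set.disjoint_left]
    intro x hx hy
    rw [mem_herzRing] at hx hy
    have : (2 : ℝ) ^ k ≤ 2 ^ (l - 1) := zpow_le_zpow_right₀ one_le_two (by omega)
    linarith [hx.2, hy.1]
  intro k l hkl
  rcases lt_or_gt_of_ne hkl with h | h
  · exact key k l h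
  · exact (key l k h).symm

lemma lintegral_rings (f : ℝ → ℝ≥0∞) : ∫⁻ x, f x = ∑' k, ∫⁻ x in herzRing k, f x := by
  rw [← lintegral_iUnion herzRing_meas herzRing_disj]
  rw [← setLIntegral_univ]
  refine (setLIntegral_congr ?_).symm
  have h0 : ∀ᵐ x : ℝ, x ≠ 0 := by simp [ae_iff]
  filter_upwards [h0] with x hx
  have h2 : x ∈ ⋃ k, herzRing k := by
    obtain ⟨n, hn⟩ := _root_.exists_mem_Ico_zpow (abs_pos.2 hx) (one_lt_two (α := ℝ))
    refine Set.mem_iUnion.2 ⟨n + 1, ?_⟩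
    rw [mem_herzRing]
    simpa using hn
  exact propext ⟨fun _ => trivial, fun _ => h2⟩

lemma lqNormOn_eq (q : ℝ≥0∞) (k : ℤ) (g : ℝ → ℝ≥0∞) :
    lqNormOn q (herzRing k) g = Lq (volume.restrict (herzRing k)) q g := by
  unfold lqNormOn Lq
  rw [essSup_indicator_eq_essSup_restrict (herzRing_meas k)]

lemma lpZNorm_eq (p : ℝ≥0∞) (a : ℤ → ℝ≥0∞) : lpZNorm p a = Lq Measure.count p a := by
  unfold lpZNorm Lq
  rw [essSup_count, lintegral_count]

def hw (α : ℝ) (k : ℤ) : ℝ≥0∞ := ENNReal.ofReal ((2 : ℝ) ^ ((k : ℝ) * α))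

lemma hw_mul (α : ℝ) (k : ℤ) : hw α k * hw (-α) k = 1 := by
  unfold hw
  rw [← ENNReal.ofReal_mul (by positivity), ← Real.rpow_add (by norm_num)]
  simp

lemma herzNorm1_eq (α : ℝ) (p q : ℝ≥0∞) (g : ℝ → ℝ≥0∞) :
    herzNorm1 α p q g = Lq Measure.count p
      fun k => hw α k * Lq (volume.restrict (herzRing k)) q g := by
  unfold herzNorm1
  rw [lpZNorm_eq]
  simp_rw [lqNormOn_eq]
  rfl

lemma herz1_meas (α : ℝ) (p q : ℝ≥0∞) (Y : Type) [MeasurableSpace Y] (F : ℝ → Y → ℝ≥0∞)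
    (hF : Measurable (Function.uncurry F)) : Measurable fun y => herzNorm1 α p q fun x => F x y := by
  simp_rw [herzNorm1_eq]
  refine Lq_meas _ p Y (fun k y => hw α k * Lq (volume.restrict (herzRing k)) q fun x => F x y) ?_
  refine measurable_from_prod_countable_right fun k => ?_
  exact (Lq_meas (volume.restrict (herzRing k)) q Y F hF).const_mul (hw α k)

lemma lint_count_mono_sup (a : ℤ → ℝ≥0∞) (u : ℤ → ℕ → ℝ≥0∞) (hu : ∀ k, Monotone (u k)) :
    ∑' k, a k * (⨆ i, u k i) = ⨆ i, ∑' k, a k * u k i := by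
  simp_rw [← lintegral_count, ENNReal.mul_iSup]
  rw [lintegral_iSup]
  · intro i; exact measurable_of_countable _
  · intro i j hij k
    dsimp only
    gcongr
    exact hu k hij

lemma herz1_nice (α : ℝ) {p q p' q' : ℝ≥0∞} (hp : 1 ≤ p) (hq : 1 ≤ q)
    (hp' : 1 / p + 1 / p' = 1) (hq' : 1 / q + 1 / q' = 1) :
    Nice (volume : Measure ℝ) (herzNorm1 α p q) (herzNorm1 (-α) p' q') where
  meas := herz1_meas α p q
  meas' := herz1_meas (-α) p' q'
  mono' := by
    intro g h H
    rw [herzNorm1_eq, herzNorm1_eq]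
    refine Lq_mono _ _ (Eventually.of_forall fun k => ?_)
    dsimp only
    gcongr
    exact Lq_mono _ _ (Eventually.of_forall H)
  smul' := by
    intro c g hg
    rw [herzNorm1_eq, herzNorm1_eq, ← Lq_smul _ _ (conj_pos' hp') _ (measurable_of_countable _)]
    congr 1
    ext k
    rw [Lq_smul _ _ (conj_pos' hq') _ hg, mul_left_comm]
  holder := by
    intro f g hf hg
    rw [herzNorm1_eq, herzNorm1_eq, lintegral_rings]
    refine le_trans ?_ (Lq_holder _ hp hp' _ _ (measurable_of_countable _)
      (measurable_of_countable _))
    rw [lintegral_count]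
    refine ENNReal.tsum_le_tsum fun k => ?_
    refine (Lq_holder _ hq hq' _ _ hf hg).trans (le_of_eq ?_)
    calc _ = (hw α k * hw (-α) k) * (Lq (volume.restrict (herzRing k)) q f *
          Lq (volume.restrict (herzRing k)) q' g) := by rw [hw_mul, one_mul]
      _ = _ := by ring
  dual := by
    intro Y _ F hF
    have hFy : ∀ y, Measurable fun x => F x y := fun y => hF.comp measurable_prodMk_right
    choose G1 hG1m hG1n hG1mono hG1 using fun k : ℤ =>
      (Lq_nice (volume.restrict (herzRing k)) hq hq').dual_mono Y F hF
    let M : ℤ → Y → ℝ≥0∞ := fun k y => hw α k * Lq (volume.restrict (herzRing k)) q fun x => F x y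
    have hM : Measurable (Function.uncurry M) := measurable_from_prod_countable_right fun k =>
      (Lq_meas (volume.restrict (herzRing k)) q Y F hF).const_mul (hw α k)
    obtain ⟨G2, hG2m, hG2n, hG2⟩ := Lq_dual (Measure.count : Measure ℤ) hp hp' Y M hM
    have hG1y : ∀ k i y, Measurable fun x => G1 k i x y := fun k i y =>
      (hG1m k i).comp measurable_prodMk_right
    have hG2k : ∀ j k, Measurable fun y => G2 j k y := fun j k =>
      (hG2m j).comp measurable_prodMk_left
    obtain ⟨e, he⟩ := exists_surjective_nat (ℕ × ℕ)
    let G : ℕ × ℕ → ℝ → Y → ℝ≥0∞ := fun z x y =>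
      ∑' k, (herzRing k).indicator (fun x => hw α k * (G2 z.2 k y * G1 k z.1 x y)) x
    have hGr : ∀ z k x y, x ∈ herzRing k → G z x y = hw α k * (G2 z.2 k y * G1 k z.1 x y) := by
      intro z k x y hx
      simp only [G]
      rw [tsum_eq_single k, Set.indicator_of_mem hx]
      intro l hl
      refine Set.indicator_of_notMem (fun hx' => ?_) _
      exact Set.disjoint_left.1 (herzRing_disj hl) hx' hx
    have hae : ∀ z k y, (fun x => G z x y) =ᵐ[volume.restrict (herzRing k)]
        fun x => (hw α k * G2 z.2 k y) * G1 k z.1 x y := by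
      intro z k y
      filter_upwards [ae_restrict_mem (herzRing_meas k)] with x hx
      rw [hGr z k x y hx, mul_assoc]
    refine ⟨fun j => G (e j), fun j => ?_, fun j y => ?_, fun y => ?_⟩
    · refine Measurable.tsum fun k => ?_
      have : Measurable (fun w : ℝ × Y => hw α k * (G2 (e j).2 k w.2 * G1 k (e j).1 w.1 w.2)) :=
        (((hG2k _ k).comp measurable_snd).mul (hG1m k _)).const_mul _
      exact this.indicator (measurable_fst (herzRing_meas k))
    · rw [herzNorm1_eq]
      refine (Lq_mono _ _ (Eventually.of_forall fun k => ?_)).trans (hG2n (e j).2 y)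
      dsimp only
      calc _ ≤ hw (-α) k * Lq (volume.restrict (herzRing k)) q'
              (fun x => (hw α k * G2 (e j).2 k y) * G1 k (e j).1 x y) := by
            gcongr
            exact Lq_mono _ _ (hae _ k y).le
        _ = (hw α k * hw (-α) k) * (G2 (e j).2 k y * Lq (volume.restrict (herzRing k)) q'
              (fun x => G1 k (e j).1 x y)) := by
            rw [Lq_smul _ _ (conj_pos' hq') _ (hG1y _ _ _)]; ring
        _ ≤ 1 * (G2 (e j).2 k y * 1) := by
            rw [hw_mul]; gcongr; exact hG1n _ _ _
        _ = _ := by simp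
    · rw [herzNorm1_eq]
      refine (hG2 y).trans (iSup_le fun j => ?_)
      rw [lintegral_count]
      calc ∑' k, M k y * G2 j k y ≤ ∑' k, (hw α k * G2 j k y) * ⨆ i,
            ∫⁻ x in herzRing k, F x y * G1 k i x y := by
            refine ENNReal.tsum_le_tsum fun k => ?_
            simp only [M]
            rw [mul_right_comm]
            gcongr
            exact hG1 k y
        _ = ⨆ i, ∑' k, (hw α k * G2 j k y) * ∫⁻ x in herzRing k, F x y * G1 k i x y :=
            lint_count_mono_sup _ _ fun k => hG1mono k y
        _ ≤ _ := by
            refine iSup_le fun i => ?_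
            obtain ⟨m, hm⟩ := he (i, j)
            refine le_trans (le_of_eq ?_) (le_iSup _ m)
            dsimp only
            rw [hm, lintegral_rings]
            congr 1
            ext k
            have hmm : Measurable fun x => F x y * G1 k i x y := (hFy y).mul (hG1y _ _ _)
            rw [← lintegral_const_mul _ hmm]
            refine lintegral_congr_ae ?_
            filter_upwards [hae (i, j) k y] with x hx
            rw [hx]; ring

lemma lintegral_snoc (n : ℕ) (f : (Fin (n+1) → ℝ) → ℝ≥0∞) (hf : Measurable f) :
    ∫⁻ z, f z = ∫⁻ x : ℝ, ∫⁻ y : Fin n → ℝ, f (Fin.snoc y x) := by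
  have h := (volume_preserving_piFinSuccAbove (fun _ : Fin (n+1) => ℝ) (Fin.last n)).symm
  rw [← h.lintegral_comp hf]
  rw [Measure.volume_eq_prod, lintegral_prod]
  · simp [MeasurableEquiv.piFinSuccAbove, Fin.insertNthEquiv]
  · exact (hf.comp h.measurable).aemeasurable

lemma measurable_snoc' (n : ℕ) : Measurable fun w : (Fin n → ℝ) × ℝ =>
    (Fin.snoc w.1 w.2 : Fin (n+1) → ℝ) := by
  refine measurable_pi_lambda _ fun i => ?_
  refine Fin.lastCases ?_ (fun i => ?_) i
  · simpa using measurable_snd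
  · have : Measurable fun w : (Fin n → ℝ) × ℝ => w.1 i := (measurable_pi_apply i).comp measurable_fst
    simpa using this

lemma measurable_init' (n : ℕ) : Measurable fun w : (Fin (n+1) → ℝ) => (Fin.init w : Fin n → ℝ) :=
  measurable_pi_lambda _ fun _ => measurable_pi_apply _

lemma mixed_nice (n : ℕ) : ∀ (α : Fin n → ℝ) (p q p' q' : Fin n → ℝ≥0∞)
    (_ : ∀ i, 1 ≤ p i) (_ : ∀ i, 1 ≤ q i)
    (_ : ∀ i, 1 / p i + 1 / p' i = 1) (_ : ∀ i, 1 / q i + 1 / q' i = 1),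
    Nice (volume : Measure (Fin n → ℝ)) (mixedHerzNormE n α p q)
      (mixedHerzNormE n (-α) p' q') := by
  induction n with
  | zero =>
    intro α p q p' q' hp hq hp' hq'
    have hl : ∀ f : (Fin 0 → ℝ) → ℝ≥0∞, ∫⁻ x, f x = f fun i => i.elim0 := by
      intro f
      rw [volume_pi, Measure.pi_of_empty, lintegral_dirac]
      exact congrArg f (Subsingleton.elim _ _)
    constructor
    · intro Y _ F hF; exact hF.comp measurable_prodMk_left
    · intro Y _ F hF; exact hF.comp measurable_prodMk_left
    · intro g h H; exact H _
    · intro c g _; rfl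
    · intro f g hf hg; rw [hl]; rfl
    · intro Y _ F hF
      refine ⟨fun _ _ _ => 1, fun _ => measurable_const, fun _ _ => le_rfl, fun y => ?_⟩
      simp [hl, mixedHerzNormE]
  | succ n ih =>
    intro α p q p' q' hp hq hp' hq'
    have H1 := ih (Fin.init α) (Fin.init p) (Fin.init q) (Fin.init p') (Fin.init q')
      (fun i => hp _) (fun i => hq _) (fun i => hp' _) (fun i => hq' _)
    have H2 := herz1_nice (α (Fin.last n)) (hp (Fin.last n)) (hq (Fin.last n)) (hp' (Fin.last n))
      (hq' (Fin.last n))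
    have hinit : Fin.init (-α) = -Fin.init α := rfl
    have e1 : ∀ f, mixedHerzNormE (n+1) α p q f =
      herzNorm1 (α (Fin.last n)) (p (Fin.last n)) (q (Fin.last n)) fun x =>
        mixedHerzNormE n (Fin.init α) (Fin.init p) (Fin.init q) fun y => f (Fin.snoc y x) :=
      fun f => rfl
    have e2 : ∀ f, mixedHerzNormE (n+1) (-α) p' q' f =
      herzNorm1 (-α (Fin.last n)) (p' (Fin.last n)) (q' (Fin.last n)) fun x =>
        mixedHerzNormE n (-Fin.init α) (Fin.init p') (Fin.init q') fun y => f (Fin.snoc y x) :=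
      fun f => rfl
    set N1 := mixedHerzNormE n (Fin.init α) (Fin.init p) (Fin.init q)
    set N1' := mixedHerzNormE n (-Fin.init α) (Fin.init p') (Fin.init q')
    set N2 := herzNorm1 (α (Fin.last n)) (p (Fin.last n)) (q (Fin.last n))
    set N2' := herzNorm1 (-α (Fin.last n)) (p' (Fin.last n)) (q' (Fin.last n))
    have hsn := measurable_snoc' n
    have hFs : ∀ (Y : Type) [MeasurableSpace Y] (F : (Fin (n+1) → ℝ) → Y → ℝ≥0∞),
        Measurable (Function.uncurry F) →
        Measurable (Function.uncurry fun (y : Fin n → ℝ) (w : ℝ × Y) => F (Fin.snoc y w.1) w.2) := by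
      intro Y _ F hF
      exact hF.comp ((hsn.comp (measurable_fst.prodMk (measurable_fst.comp measurable_snd))).prodMk
        (measurable_snd.comp measurable_snd))
    have hfs : ∀ f : (Fin (n+1) → ℝ) → ℝ≥0∞, Measurable f → ∀ x : ℝ,
        Measurable fun y : Fin n → ℝ => f (Fin.snoc y x) := fun f hf x =>
      hf.comp (hsn.comp measurable_prodMk_right)
    have hfs2 : ∀ f : (Fin (n+1) → ℝ) → ℝ≥0∞, Measurable f →
        Measurable (Function.uncurry fun (y : Fin n → ℝ) (x : ℝ) => f (Fin.snoc y x)) := fun f hf =>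
      hf.comp hsn
    constructor
    · intro Y _ F hF
      simp_rw [e1]
      exact H2.meas Y (fun x y => N1 fun y' => F (Fin.snoc y' x) y) (H1.meas (ℝ × Y) _ (hFs Y F hF))
    · intro Y _ F hF
      simp_rw [e2]
      exact H2.meas' Y (fun x y => N1' fun y' => F (Fin.snoc y' x) y)
        (H1.meas' (ℝ × Y) _ (hFs Y F hF))
    · intro g h H
      rw [e2, e2]
      exact H2.mono' _ _ fun x => H1.mono' _ _ fun y => H _
    · intro c g hg
      rw [e2, e2, ← H2.smul' _ _ (H1.meas' ℝ _ (hfs2 g hg))]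
      congr 1; ext x
      exact H1.smul' _ _ (hfs g hg x)
    · intro f g hf hg
      rw [e1, e2, lintegral_snoc _ (fun x => f x * g x) (hf.mul hg)]
      refine le_trans ?_ (H2.holder _ _ (H1.meas ℝ _ (hfs2 f hf)) (H1.meas' ℝ _ (hfs2 g hg)))
      exact lintegral_mono fun x => H1.holder _ _ (hfs f hf x) (hfs g hg x)
    · intro Y _ F hF
      obtain ⟨G1, hG1m, hG1n, hG1mono, hG1⟩ := H1.dual_mono (ℝ × Y) _ (hFs Y F hF)
      obtain ⟨G2, hG2m, hG2n, hG2⟩ := H2.dual Y (fun x y => N1 fun y' => F (Fin.snoc y' x) y)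
        (H1.meas (ℝ × Y) _ (hFs Y F hF))
      obtain ⟨e, he⟩ := exists_surjective_nat (ℕ × ℕ)
      let G : ℕ × ℕ → (Fin (n+1) → ℝ) → Y → ℝ≥0∞ := fun z w y =>
        G2 z.2 (w (Fin.last n)) y * G1 z.1 (Fin.init w) (w (Fin.last n), y)
      have hG : ∀ z, Measurable (Function.uncurry (G z)) := by
        intro z
        have hl : Measurable fun w : (Fin (n+1) → ℝ) × Y => (w.1 (Fin.last n), w.2) :=
          ((measurable_pi_apply _).comp measurable_fst).prodMk measurable_snd
        have hi : Measurable fun w : (Fin (n+1) → ℝ) × Y => (Fin.init w.1 : Fin n → ℝ) :=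
          (measurable_init' n).comp measurable_fst
        exact ((hG2m z.2).comp hl).mul ((hG1m z.1).comp (hi.prodMk hl))
      have hGs : ∀ z (y' : Fin n → ℝ) x y, G z (Fin.snoc y' x) y = G2 z.2 x y * G1 z.1 y' (x, y) := by
        intro z y' x y
        simp [G]
      have hG1y : ∀ i w, Measurable fun y' => G1 i y' w := fun i w =>
        (hG1m i).comp measurable_prodMk_right
      have hFy : ∀ y, Measurable fun z => F z y := fun y => hF.comp measurable_prodMk_right
      refine ⟨fun j => G (e j), fun j => hG _, fun j y => ?_, fun y => ?_⟩
      · rw [e2]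
        refine (H2.mono' _ _ fun x => ?_).trans (hG2n (e j).2 y)
        simp_rw [hGs]
        rw [H1.smul' _ _ (hG1y _ _)]
        calc _ ≤ G2 (e j).2 x y * 1 := by gcongr; exact hG1n _ _
          _ = _ := mul_one _
      · rw [e1]
        refine (hG2 y).trans (iSup_le fun j => ?_)
        have hms : ∀ i, Measurable fun x : ℝ => ∫⁻ y', F (Fin.snoc y' x) y * G1 i y' (x, y) := by
          intro i
          have := meas_lint (volume : Measure (Fin n → ℝ))
            (fun y' w => F (Fin.snoc y' w.1) w.2 * G1 i y' w) ((hFs Y F hF).mul (hG1m i))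
          exact this.comp measurable_prodMk_right
        have hG2x : Measurable fun x => G2 j x y := (hG2m j).comp measurable_prodMk_right
        calc _ ≤ ∫⁻ x, ⨆ i, (∫⁻ y', F (Fin.snoc y' x) y * G1 i y' (x, y)) * G2 j x y := by
              refine lintegral_mono fun x => ?_
              rw [← ENNReal.iSup_mul]
              gcongr
              exact hG1 (x, y)
          _ = ⨆ i, ∫⁻ x, (∫⁻ y', F (Fin.snoc y' x) y * G1 i y' (x, y)) * G2 j x y := by
              rw [lintegral_iSup]
              · intro i; exact (hms i).mul hG2x
              · intro i i' hii x
                dsimp only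
                gcongr ?_ * _
                exact hG1mono (x, y) hii
          _ ≤ _ := by
              refine iSup_le fun i => ?_
              obtain ⟨m, hm⟩ := he (i, j)
              refine le_trans (le_of_eq ?_) (le_iSup _ m)
              dsimp only
              rw [hm, lintegral_snoc]
              · refine lintegral_congr fun x => ?_
                simp_rw [hGs]
                have hmm : Measurable fun y' : Fin n → ℝ => F (Fin.snoc y' x) y * G1 i y' (x, y) :=
                  (hfs _ (hFy y) x).mul (hG1y _ _)
                rw [← lintegral_mul_const _ hmm]
                refine lintegral_congr fun y' => ?_
                ring
              · exact (hFy y).mul ((hG (i, j)).comp measurable_prodMk_right)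

lemma mem_herzI (m : ℕ) (x : ℝ) :
    x ∈ herzI m ↔ (2 : ℝ) ^ (-(m : ℤ)) ≤ |x| ∧ |x| < (2 : ℝ) ^ (m : ℤ) := by
  unfold herzI
  have h0 : (0 : ℝ) < 2 ^ (-(m : ℤ)) := by positivity
  simp only [Set.mem_union, Set.mem_Ioc, Set.mem_Ico]
  constructor
  · rintro (⟨h1, h2⟩ | ⟨h1, h2⟩)
    · rw [abs_of_neg (by linarith)]; constructor <;> linarith
    · rw [abs_of_pos (by linarith)]; constructor <;> linarith
  · rintro ⟨h1, h2⟩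
    rcases le_or_gt 0 x with hx | hx
    · rw [abs_of_nonneg hx] at h1 h2; right; exact ⟨h1, h2⟩
    · rw [abs_of_neg hx] at h1 h2; left; constructor <;> linarith

lemma herzI_mono : Monotone herzI := by
  intro i j hij x hx
  rw [mem_herzI] at *
  have h1 : (2 : ℝ) ^ (-(j : ℤ)) ≤ 2 ^ (-(i : ℤ)) := zpow_le_zpow_right₀ one_le_two (by omega)
  have h2 : (2 : ℝ) ^ (i : ℤ) ≤ 2 ^ (j : ℤ) := zpow_le_zpow_right₀ one_le_two (by omega)
  exact ⟨h1.trans hx.1, hx.2.trans_le h2⟩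

lemma herzA_mono (n : ℕ) : Monotone (herzA n) := by
  intro i j hij
  exact Set.pi_mono fun _ _ => herzI_mono hij

lemma herzA_meas (n m : ℕ) : MeasurableSet (herzA n m) :=
  MeasurableSet.univ_pi fun _ => measurableSet_Ioc.union measurableSet_Ico

lemma herzA_fin (n m : ℕ) : volume (herzA n m) ≠ ∞ := by
  have hs : herzA n m ⊆ Set.Icc (fun _ => -(2 : ℝ) ^ (m : ℤ)) (fun _ => (2 : ℝ) ^ (m : ℤ)) := by
    intro x hx
    have : ∀ i, |x i| ≤ (2 : ℝ) ^ (m : ℤ) := fun i => ((mem_herzI m _).1 (hx i trivial)).2.le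
    exact ⟨fun i => (abs_le.1 (this i)).1, fun i => (abs_le.1 (this i)).2⟩
  exact ((measure_mono hs).trans_lt isCompact_Icc.measure_lt_top).ne

lemma herzI_ex (x : ℝ) (hx : x ≠ 0) : ∃ m, x ∈ herzI m := by
  obtain ⟨a, ha⟩ := pow_unbounded_of_one_lt |x| (one_lt_two (α := ℝ))
  obtain ⟨b, hb⟩ := pow_unbounded_of_one_lt |x|⁻¹ (one_lt_two (α := ℝ))
  have hx' := abs_pos.2 hx
  refine ⟨max a b, ?_⟩
  rw [mem_herzI]
  constructor
  · rw [zpow_neg, zpow_natCast]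
    refine inv_le_of_inv_le₀ hx' (hb.le.trans ?_)
    exact pow_le_pow_right₀ one_le_two (le_max_right _ _)
  · rw [zpow_natCast]
    exact ha.trans_le (pow_le_pow_right₀ one_le_two (le_max_left _ _))

lemma herzA_ae (n : ℕ) : ∀ᵐ x : Fin n → ℝ, ∃ m, x ∈ herzA n m := by
  have h : ∀ᵐ x : Fin n → ℝ, ∀ i, x i ≠ 0 := by
    rw [ae_all_iff]
    intro i
    have := Measure.pi_hyperplane (fun _ : Fin n => (volume : Measure ℝ)) i 0
    simpa [ae_iff, volume_pi] using this
  filter_upwards [h] with x hx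
  choose m hm using fun i => herzI_ex (x i) (hx i)
  refine ⟨Finset.univ.sup m, fun i _ => ?_⟩
  exact herzI_mono (Finset.le_sup (Finset.mem_univ i)) (hm i)

def UClass (n : ℕ) (g : (Fin n → ℝ) → ℂ) : Prop :=
  ∃ (m N : ℕ) (a : Fin N → ℂ) (E : Fin N → Set (Fin n → ℝ)),
          (∀ k, MeasurableSet (E k) ∧ volume (E k) ≠ ∞) ∧
          (g = fun x => ∑ k, (E k).indicator (fun _ => a k) x) ∧
          ∀ x, x ∉ herzA n m → g x = 0

lemma UClass.measurable {n : ℕ} {g : (Fin n → ℝ) → ℂ} (h : UClass n g) : Measurable g := by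
  obtain ⟨m, N, a, E, hE, rfl, -⟩ := h
  exact Finset.measurable_sum _ fun k _ => measurable_const.indicator (hE k).1

lemma UClass.smul {n : ℕ} {g : (Fin n → ℝ) → ℂ} (h : UClass n g) (c : ℂ) :
    UClass n fun x => c * g x := by
  obtain ⟨m, N, a, E, hE, rfl, h0⟩ := h
  refine ⟨m, N, fun k => c * a k, E, hE, ?_, fun x hx => ?_⟩
  · ext x
    rw [Finset.mul_sum]
    refine Finset.sum_congr rfl fun k _ => ?_
    by_cases hx : x ∈ E k <;> simp [hx]
  · have := h0 x hx
    dsimp only at this ⊢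
    rw [this, mul_zero]

lemma UClass.of_simple {n m : ℕ} (h : SimpleFunc (Fin n → ℝ) ℂ) (B : Set (Fin n → ℝ))
    (hB : MeasurableSet B) (hBA : B ⊆ herzA n m) : UClass n (B.indicator h) := by
  classical
  refine ⟨m, h.range.card, fun k => (h.range.equivFin.symm k : ℂ),
    fun k => (h ⁻¹' {(h.range.equivFin.symm k : ℂ)}) ∩ B, fun k => ⟨?_, ?_⟩, ?_, fun x hx => ?_⟩
  · exact (h.measurableSet_preimage _).inter hB
  · exact ne_top_of_le_ne_top (herzA_fin n m) (measure_mono (Set.inter_subset_right.trans hBA))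
  · ext x
    rw [Equiv.sum_comp h.range.equivFin.symm
      (fun a : h.range => ((h ⁻¹' {(a : ℂ)}) ∩ B).indicator (fun _ => (a : ℂ)) x)]
    rw [Finset.sum_coe_sort h.range (fun a => ((h ⁻¹' {a}) ∩ B).indicator (fun _ => a) x)]
    by_cases hx : x ∈ B
    · rw [Set.indicator_of_mem hx, Finset.sum_eq_single (h x)]
      · have hm : x ∈ h ⁻¹' {h x} ∩ B := ⟨rfl, hx⟩
        rw [Set.indicator_of_mem hm]
      · intro b _ hb
        refine Set.indicator_of_notMem (fun hh => hb ?_) _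
        exact (hh.1 : h x = b).symm
      · intro hh; exact absurd (h.mem_range_self x) hh
    · rw [Set.indicator_of_notMem hx]
      symm
      refine Finset.sum_eq_zero fun a _ => Set.indicator_of_notMem (fun hh => hx hh.2) _
  · exact Set.indicator_of_notMem (fun hh => hx (hBA hh)) _

lemma pairing_le {n : ℕ} {N N' : ((Fin n → ℝ) → ℝ≥0∞) → ℝ≥0∞}
    (H : Nice (volume : Measure (Fin n → ℝ)) N N') (f g : (Fin n → ℝ) → ℂ) (hf : Measurable f)
    (hg : Measurable g) :
    ‖∫ x, f x * g x‖ₑ ≤ N (fun x => ‖f x‖ₑ) * N' (fun x => ‖g x‖ₑ) := by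
  refine (enorm_integral_le_lintegral_enorm _).trans ?_
  simp_rw [enorm_mul]
  exact H.holder _ _ hf.enorm hg.enorm

lemma pairing_le_S {n : ℕ} {N N' : ((Fin n → ℝ) → ℝ≥0∞) → ℝ≥0∞}
    (H : Nice (volume : Measure (Fin n → ℝ)) N N') (f g : (Fin n → ℝ) → ℂ) (hf : Measurable f)
    (S : ℝ≥0∞) (hS : ∀ g, UClass n g → N' (fun x => ‖g x‖ₑ) = 1 → ‖∫ x, f x * g x‖ₑ ≤ S)
    (hg : UClass n g) (h1 : N' (fun x => ‖g x‖ₑ) ≤ 1) : ‖∫ x, f x * g x‖ₑ ≤ S := by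
  set b := N' (fun x => ‖g x‖ₑ) with hb
  by_cases hb0 : b = 0
  · have := pairing_le H f g hf hg.measurable
    rw [← hb, hb0, mul_zero] at this
    exact this.trans zero_le
  have hbt : b ≠ ∞ := ne_top_of_le_ne_top ENNReal.one_ne_top h1
  have hc : ‖((b⁻¹).toReal : ℂ)‖ₑ = b⁻¹ := by
    have hz : b⁻¹ ≠ ∞ := by simpa using hb0
    rw [← ofReal_norm, Complex.norm_real, Real.norm_of_nonneg ENNReal.toReal_nonneg,
      ENNReal.ofReal_toReal hz]
  have h2 := hS _ (hg.smul ((b⁻¹).toReal : ℂ)) (by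
    simp_rw [enorm_mul, hc]
    rw [H.smul' _ _ hg.measurable.enorm, ← hb, ENNReal.inv_mul_cancel hb0 hbt])
  have h3 : ∫ x, f x * (((b⁻¹).toReal : ℂ) * g x) = ((b⁻¹).toReal : ℂ) * ∫ x, f x * g x := by
    rw [← integral_const_mul]
    congr 1; ext x; ring
  rw [h3, enorm_mul, hc] at h2
  refine le_trans ?_ h2
  have : 1 ≤ b⁻¹ := ENNReal.one_le_inv.2 h1
  calc _ = 1 * ‖∫ x, f x * g x‖ₑ := (one_mul _).symm
    _ ≤ _ := by gcongr

lemma lint_le_S {n : ℕ} {N N' : ((Fin n → ℝ) → ℝ≥0∞) → ℝ≥0∞}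
    (H : Nice (volume : Measure (Fin n → ℝ)) N N') (f : (Fin n → ℝ) → ℂ) (hf : Measurable f)
    (S : ℝ≥0∞) (hS : ∀ g, UClass n g → N' (fun x => ‖g x‖ₑ) = 1 → ‖∫ x, f x * g x‖ₑ ≤ S)
    (G : (Fin n → ℝ) → ℝ≥0∞) (hG : Measurable G) (h1 : N' G ≤ 1) :
    ∫⁻ x, ‖f x‖ₑ * G x ≤ S := by
  let B : ℕ → Set (Fin n → ℝ) := fun m => herzA n m ∩ {x | ‖f x‖ ≤ m}
  have hB : ∀ m, MeasurableSet (B m) := fun m =>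
    (herzA_meas n m).inter (measurableSet_le hf.norm measurable_const)
  have hBmono : Monotone B := by
    intro i j hij x hx
    refine ⟨herzA_mono n hij hx.1, ?_⟩
    have : ‖f x‖ ≤ i := hx.2
    exact this.trans (by exact_mod_cast hij)
  let e : ℕ → SimpleFunc (Fin n → ℝ) ℝ≥0∞ := SimpleFunc.eapprox G
  have heG : ∀ m x, e m x ≤ G x := fun m x => by
    rw [← SimpleFunc.iSup_eapprox_apply hG x]
    exact le_iSup (fun m => SimpleFunc.eapprox G m x) m
  let V : ℕ → (Fin n → ℝ) → ℝ≥0∞ := fun m => (B m).indicator (e m)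
  have hVm : ∀ m, Measurable (V m) := fun m => (e m).measurable.indicator (hB m)
  have hVmono : ∀ x, Monotone fun m => V m x := by
    intro x i j hij
    refine (Set.indicator_le_indicator_of_subset (hBmono hij) (fun _ => zero_le) x).trans ?_
    refine Set.indicator_le_indicator ?_
    exact SimpleFunc.monotone_eapprox G hij x
  have hVG : ∀ m x, V m x ≤ G x := fun m x =>
    Set.indicator_le' (fun x _ => heG m x) (fun _ _ => zero_le) x
  have hsup : ∀ᵐ x, ‖f x‖ₑ * G x = ⨆ m, ‖f x‖ₑ * V m x := by
    filter_upwards [herzA_ae n] with x hx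
    obtain ⟨m0, hm0⟩ := hx
    obtain ⟨m1, hm1⟩ := exists_nat_ge ‖f x‖
    rw [← ENNReal.mul_iSup]
    congr 1
    refine le_antisymm ?_ (iSup_le fun m => hVG m x)
    rw [← SimpleFunc.iSup_eapprox_apply hG x]
    refine iSup_le fun m => ?_
    refine le_trans ?_ (le_iSup _ (max m (max m0 m1)))
    have hx : x ∈ B (max m (max m0 m1)) := by
      refine ⟨herzA_mono n (by simp) hm0, hm1.trans ?_⟩
      exact_mod_cast (by simp)
    simp only [V, Set.indicator_of_mem hx]
    exact SimpleFunc.monotone_eapprox G (le_max_left _ _) x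
  rw [lintegral_congr_ae hsup, lintegral_iSup (f := fun m x => ‖f x‖ₑ * V m x)
    (fun m => hf.enorm.mul (hVm m))
    (fun i j hij x => by dsimp only; gcongr; exact hVmono x hij)]
  refine iSup_le fun m => ?_
  -- the phase
  let u : (Fin n → ℝ) → ℂ := fun x => (starRingEnd ℂ) (f x) / (‖f x‖ : ℂ)
  have hu : Measurable u := by
    refine Measurable.div ?_ (Complex.measurable_ofReal.comp hf.norm)
    exact Complex.continuous_conj.measurable.comp hf
  have hfu : ∀ x, f x * u x = (‖f x‖ : ℂ) := by
    intro x
    by_cases hx : f x = 0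
    · simp [hx, u]
    · have : (‖f x‖ : ℂ) ≠ 0 := by simpa using hx
      simp only [u]
      rw [← mul_div_assoc, Complex.mul_conj, Complex.normSq_eq_norm_sq, div_eq_iff this]
      push_cast; ring
  have hu1 : ∀ x, u x ∈ Metric.closedBall (0 : ℂ) 1 := by
    intro x
    rw [mem_closedBall_zero_iff]
    simp only [u, norm_div, RCLike.norm_conj, Complex.norm_real, norm_norm]
    exact div_self_le_one _
  have h0 : (0 : ℂ) ∈ Metric.closedBall (0 : ℂ) 1 := by simp
  let uk : ℕ → SimpleFunc (Fin n → ℝ) ℂ := fun k => SimpleFunc.approxOn u hu _ 0 h0 k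
  have huk1 : ∀ k x, ‖uk k x‖ ≤ 1 := fun k x => by
    have := SimpleFunc.approxOn_mem hu h0 k x
    rwa [mem_closedBall_zero_iff] at this
  have hukt : ∀ x, Tendsto (fun k => uk k x) atTop (nhds (u x)) := fun x =>
    SimpleFunc.tendsto_approxOn hu h0 (subset_closure (hu1 x))
  let r : SimpleFunc (Fin n → ℝ) ℝ := (e m).map ENNReal.toReal
  have hr0 : ∀ x, 0 ≤ r x := fun x => ENNReal.toReal_nonneg
  have hre : ∀ x, ENNReal.ofReal (r x) = e m x := fun x =>
    ENNReal.ofReal_toReal (SimpleFunc.eapprox_lt_top G m x).ne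
  let rc : SimpleFunc (Fin n → ℝ) ℂ := r.map Complex.ofReal
  have hrc : ∀ x, rc x = (r x : ℂ) := fun x => rfl
  let g : ℕ → (Fin n → ℝ) → ℂ := fun k => (B m).indicator (uk k * rc)
  have hgU : ∀ k, UClass n (g k) := fun k =>
    UClass.of_simple (m := m) (uk k * rc) (B m) (hB m) Set.inter_subset_left
  have hgn : ∀ k x, ‖g k x‖ ≤ (B m).indicator r x := by
    intro k x
    by_cases hx : x ∈ B m
    · simp only [g, Set.indicator_of_mem hx, Pi.mul_apply, norm_mul, hrc, Complex.norm_real,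
        Real.norm_of_nonneg (hr0 x)]
      exact mul_le_of_le_one_left (hr0 x) (huk1 k x)
    · simp [g, Set.indicator_of_notMem hx]
  have hVr : ∀ x, ENNReal.ofReal ((B m).indicator r x) = V m x := by
    intro x
    by_cases hx : x ∈ B m
    · simp only [V, Set.indicator_of_mem hx, hre]
    · simp [V, Set.indicator_of_notMem hx]
  have hgV : ∀ k x, ‖g k x‖ₑ ≤ G x := fun k x => by
    rw [← ofReal_norm]
    exact (ENNReal.ofReal_le_ofReal (hgn k x)).trans ((hVr x).le.trans (hVG m x))
  have hle : ∀ k, ‖∫ x, f x * g k x‖ₑ ≤ S := fun k =>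
    pairing_le_S H f (g k) hf S hS (hgU k) ((H.mono' _ _ (hgV k)).trans h1)
  have hbi : Integrable (fun x => ‖f x‖ * (B m).indicator r x) := by
    obtain ⟨C, hC⟩ := r.exists_forall_norm_le
    have h2 : (fun x => ‖f x‖ * (B m).indicator r x) =
        (B m).indicator (fun x => ‖f x‖ * r x) := by
      ext x
      by_cases hx : x ∈ B m
      · simp only [Set.indicator_of_mem hx]
      · simp [Set.indicator_of_notMem hx]
    rw [h2, integrable_indicator_iff (hB m)]
    refine Measure.integrableOn_of_bounded (M := m * C) ?_ ?_ ?_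
    · exact ne_top_of_le_ne_top (herzA_fin n m) (measure_mono Set.inter_subset_left)
    · exact (hf.norm.mul r.measurable).aestronglyMeasurable
    · filter_upwards [ae_restrict_mem (hB m)] with x hx
      rw [norm_mul, norm_norm]
      have : ‖f x‖ ≤ m := hx.2
      exact mul_le_mul this (hC x) (norm_nonneg _) (by positivity)
  have hlim : Tendsto (fun k => ∫ x, f x * g k x) atTop
      (nhds (∫ x, ((‖f x‖ * (B m).indicator r x : ℝ) : ℂ))) := by
    refine tendsto_integral_of_dominated_convergence (fun x => ‖f x‖ * (B m).indicator r x)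
      (fun k => (hf.mul (hgU k).measurable).aestronglyMeasurable) hbi (fun k => ?_) ?_
    · refine Eventually.of_forall fun x => ?_
      rw [norm_mul]
      gcongr
      exact hgn k x
    · refine Eventually.of_forall fun x => ?_
      by_cases hx : x ∈ B m
      · simp only [g, Set.indicator_of_mem hx]
        have := ((hukt x).mul_const (rc x)).const_mul (f x)
        rw [← mul_assoc, hfu x, hrc] at this
        push_cast
        exact this
      · simp [g, Set.indicator_of_notMem hx]
  have hfinal := le_of_tendsto' ((continuous_enorm.tendsto _).comp hlim) hle
  refine le_trans (le_of_eq ?_) hfinal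
  have hnn : ∀ x, 0 ≤ ‖f x‖ * (B m).indicator r x := fun x =>
    mul_nonneg (norm_nonneg _) (Set.indicator_nonneg (fun x _ => hr0 x) x)
  rw [integral_complex_ofReal, ← ofReal_norm, Complex.norm_real,
    Real.norm_of_nonneg (integral_nonneg hnn),
    ofReal_integral_eq_lintegral_ofReal hbi (Eventually.of_forall hnn)]
  refine lintegral_congr fun x => ?_
  rw [ENNReal.ofReal_mul (norm_nonneg _), hVr, ofReal_norm]

/-- a function whose pairings with simple functions vanishing outside
some `A_m` are uniformly bounded lies in the mixed-norm Herz space, with equal norm. -/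
theorem mixedHerz_pairing_norm (n : ℕ) (α : Fin n → ℝ) (p q p' q' : Fin n → ℝ≥0∞)
    (hp : ∀ i, 1 ≤ p i) (hq : ∀ i, 1 ≤ q i)
    (hp' : ∀ i, 1 / p i + 1 / p' i = 1) (hq' : ∀ i, 1 / q i + 1 / q' i = 1)
    (f : (Fin n → ℝ) → ℂ) (hf : Measurable f) (S : ℝ≥0∞)
    (hS : S = ⨆ (g : (Fin n → ℝ) → ℂ)
        (_ : ∃ (m N : ℕ) (a : Fin N → ℂ) (E : Fin N → Set (Fin n → ℝ)),
          (∀ k, MeasurableSet (E k) ∧ volume (E k) ≠ ∞) ∧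
          (g = fun x => ∑ k, (E k).indicator (fun _ => a k) x) ∧
          ∀ x, x ∉ herzA n m → g x = 0)
        (_ : herzNormC n (-α) p' q' g = 1),
        (‖∫ x, f x * g x‖₊ : ℝ≥0∞))
    (hfin : S ≠ ∞) :
    herzNormC n α p q f = S := by

  have H := mixed_nice n α p q p' q' hp hq hp' hq'
  have hS1 : ∀ g, UClass n g → mixedHerzNormE n (-α) p' q' (fun x => ‖g x‖ₑ) = 1 →
      ‖∫ x, f x * g x‖ₑ ≤ S := by
    intro g hg hg1
    rw [hS]
    exact le_iSup_of_le g (le_iSup_of_le hg (le_iSup_of_le hg1 le_rfl))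
  refine le_antisymm ?_ ?_
  · obtain ⟨G, hGm, hG1, hG2⟩ := H.dual Unit (fun x _ => ‖f x‖ₑ) (hf.enorm.comp measurable_fst)
    refine (hG2 ()).trans (iSup_le fun j => ?_)
    exact lint_le_S H f hf S hS1 (fun x => G j x ())
      ((hGm j).comp measurable_prodMk_right) (hG1 j ())
  · rw [hS]
    refine iSup_le fun g => iSup_le fun hg => iSup_le fun hg1 => ?_
    have := pairing_le H f g hf (UClass.measurable hg)
    have h2 : mixedHerzNormE n (-α) p' q' (fun x => ‖g x‖ₑ) = 1 := hg1
    rw [h2, mul_one] at this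
    exact this
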